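/- arXiv:2605.20974 — 2 statements merged into one kernel-verified Lean document; each statement's English description precedes it below -/
import Mathlib

section
/- Let G be a commutative group, N ≤ G a submonoid, b ∈ N, ℓ ∈ ℕ, and Ω ⊆ Z_{N,ℓ}(b). Then the set 𝒮_Ω(N,G) of Ω-admissible submonoids S with N ≤ S ≤ G, partially ordered by S₁ ≼ S₂ iff S₁ ≤ S₂ and every element of S₁ that is a unit of ↥S₂ is a unit of ↥S₁, has a maximal element: there exists an Ω-admissible S such that every Ω-admissible T with S ≼ T equals S. -/
/-- The set of factorizations of `b` in the submonoid `S` of the group `G`. -/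
def ZSet {G : Type*} [CommGroup G] (S : Submonoid G) (b : S) :
    Set (Multiset (Associates S)) :=
  {z | (∀ a ∈ z, Irreducible a) ∧ z.prod = Associates.mk b}

/-- The set of length-`ℓ` factorizations of `b` in `S`. -/
def ZSetLen {G : Type*} [CommGroup G] (S : Submonoid G) (b : S) (ℓ : ℕ) :
    Set (Multiset (Associates S)) :=
  {z ∈ ZSet S b | Multiset.card z = ℓ}

/-- `u` is a unit of the submonoid `S` of the group `G`: `u⁻¹ ∈ S`. -/
def IsUnitIn {G : Type*} [CommGroup G] (S : Submonoid G) (u : G) : Prop :=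
  u⁻¹ ∈ S

/-- `S` is unit-reflecting over `N`. -/
def UnitReflecting {G : Type*} [CommGroup G] (N S : Submonoid G) : Prop :=
  ∀ u ∈ S, IsUnitIn S u → ∀ x ∈ N, ∀ y ∈ N, u * y = x → u ∈ N ∧ IsUnitIn N u

/-- `S` is `Ω`-admissible over `N`: `N ≤ S`, `S` is unit-reflecting over `N`, and
every `a ∈ N` whose class in `Associates ↥N` occurs in some `z ∈ Ω` has irreducible
class in `Associates ↥S`. -/
def OmegaAdmissible {G : Type*} [CommGroup G] (N S : Submonoid G)
    (Ω : Set (Multiset (Associates N))) : Prop :=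
  N ≤ S ∧ UnitReflecting N S ∧
    ∀ (a : G) (haN : a ∈ N) (haS : a ∈ S),
      (∃ z ∈ Ω, Associates.mk (⟨a, haN⟩ : N) ∈ z) →
        Irreducible (Associates.mk (⟨a, haS⟩ : S))

/-- The survival order: `S₁ ≼ S₂` iff `S₁ ≤ S₂` and every element of `S₁` that is a
unit of `↥S₂` is a unit of `↥S₁`. -/
def Prec {G : Type*} [CommGroup G] (S₁ S₂ : Submonoid G) : Prop :=
  S₁ ≤ S₂ ∧ ∀ u ∈ S₁, IsUnitIn S₂ u → IsUnitIn S₁ u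

/-!
Every condition in the definition of admissibility concerns at most two elements of the submonoid
together with their inverses, so it survives unions of chains, and Zorn's lemma yields an admissible
submonoid that is maximal for inclusion. Since `S ≼ T` implies `S ≤ T`, maximality for inclusion is
stronger than maximality for `≼`.
-/

theorem exists_mem_mem_of_mem_sSup_of_directedOn {M : Type*} [MulOneClass M]
    {c : Set (Submonoid M)} (hne : c.Nonempty) (hdir : DirectedOn (· ≤ ·) c) {x y : M}
    (hx : x ∈ sSup c) (hy : y ∈ sSup c) : ∃ S ∈ c, x ∈ S ∧ y ∈ S := by
  obtain ⟨S, hS, hxS⟩ := (Submonoid.mem_sSup_of_directedOn hne hdir).1 hx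
  obtain ⟨T, hT, hyT⟩ := (Submonoid.mem_sSup_of_directedOn hne hdir).1 hy
  obtain ⟨R, hR, hSR, hTR⟩ := hdir S hS T hT
  exact ⟨R, hR, hSR hxS, hTR hyT⟩

theorem exists_isUnit_mk_of_isUnit_sSup_of_directedOn {M : Type*} [Monoid M] {c : Set (Submonoid M)}
    (hne : c.Nonempty) (hdir : DirectedOn (· ≤ ·) c) {u : ↥(sSup c)} (hu : IsUnit u) :
    ∃ S ∈ c, ∃ huS : (u : M) ∈ S, IsUnit (⟨u, huS⟩ : S) := by
  obtain ⟨v, huv, hvu⟩ := isUnit_iff_exists.1 hu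
  obtain ⟨S, hS, huS, hvS⟩ := exists_mem_mem_of_mem_sSup_of_directedOn hne hdir u.2 v.2
  have huvS : (⟨u, huS⟩ * ⟨v, hvS⟩ : S) = 1 := Subtype.ext (congrArg Subtype.val huv :)
  have hvuS : (⟨v, hvS⟩ * ⟨u, huS⟩ : S) = 1 := Subtype.ext (congrArg Subtype.val hvu :)
  exact ⟨S, hS, huS, isUnit_iff_exists.2 ⟨_, huvS, hvuS⟩⟩

theorem irreducible_mk_sSup_of_directedOn {M : Type*} [Monoid M] {c : Set (Submonoid M)}
    (hne : c.Nonempty) (hdir : DirectedOn (· ≤ ·) c) {a : M} (ha : a ∈ sSup c)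
    (hc : ∀ S ∈ c, ∃ haS : a ∈ S, Irreducible (⟨a, haS⟩ : S)) :
    Irreducible (⟨a, ha⟩ : ↥(sSup c)) := by
  refine irreducible_iff.2 ⟨fun h_unit ↦ ?_, fun x y hxy ↦ ?_⟩
  · obtain ⟨S, hS, _, h_unitS⟩ := exists_isUnit_mk_of_isUnit_sSup_of_directedOn hne hdir h_unit
    obtain ⟨_, ha_irr⟩ := hc S hS
    exact ha_irr.not_isUnit h_unitS
  · obtain ⟨S, hS, hxS, hyS⟩ := exists_mem_mem_of_mem_sSup_of_directedOn hne hdir x.2 y.2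
    obtain ⟨haS, ha_irr⟩ := hc S hS
    have hxyS : (⟨a, haS⟩ : S) = ⟨x, hxS⟩ * ⟨y, hyS⟩ :=
      Subtype.ext (congrArg Subtype.val hxy :)
    have isUnit_of_isUnit_mk {z : ↥(sSup c)} {hz : (z : M) ∈ S} (h : IsUnit (⟨z, hz⟩ : S)) :
        IsUnit z :=
      h.map (Submonoid.inclusion (le_sSup hS))
    exact (ha_irr.isUnit_or_isUnit hxyS).imp isUnit_of_isUnit_mk isUnit_of_isUnit_mk

-- `Associates.irreducible_mk` assumes a monoid with zero.
theorem irreducible_associates_mk_iff {M : Type*} [CommMonoid M] {a : M} :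
    Irreducible (Associates.mk a) ↔ Irreducible a := by
  simp only [irreducible_iff, Associates.isUnit_mk, Associates.forall_associated,
    Associates.mk_mul_mk, Associates.mk_eq_mk_iff_associated]
  refine and_congr_right' ⟨fun h x y hxy ↦ h x y (.of_eq hxy), fun h x y hxy ↦ ?_⟩
  obtain ⟨u, hu⟩ := hxy.symm
  have hxyu : a = x * (y * u) := by rw [← hu, mul_assoc]
  simpa only [Units.isUnit_mul_units] using h hxyu

section

variable {G : Type*} [CommGroup G]

theorem UnitReflecting.refl (N : Submonoid G) : UnitReflecting N N :=
  fun _ hu hu' _ _ _ _ _ ↦ ⟨hu, hu'⟩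

theorem UnitReflecting.sSup_of_directedOn {N : Submonoid G} {c : Set (Submonoid G)}
    (hne : c.Nonempty) (hdir : DirectedOn (· ≤ ·) c)
    (hc : ∀ S ∈ c, UnitReflecting N S) : UnitReflecting N (sSup c) := by
  intro u hu hu_inv
  obtain ⟨S, hS, huS, hu_invS⟩ := exists_mem_mem_of_mem_sSup_of_directedOn hne hdir hu hu_inv
  exact hc S hS u huS hu_invS

namespace OmegaAdmissible

variable {N : Submonoid G} {Ω : Set (Multiset (Associates N))}

theorem refl (hΩ : ∀ z ∈ Ω, ∀ a ∈ z, Irreducible a) : OmegaAdmissible N N Ω :=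
  ⟨le_rfl, .refl N, fun _ _ _ ⟨z, hz, haz⟩ ↦ hΩ z hz _ haz⟩

theorem sSup_of_directedOn {c : Set (Submonoid G)} (hne : c.Nonempty) (hdir : DirectedOn (· ≤ ·) c)
    (hc : ∀ S ∈ c, OmegaAdmissible N S Ω) : OmegaAdmissible N (sSup c) Ω := by
  obtain ⟨S₀, hS₀⟩ := hne
  refine ⟨(hc S₀ hS₀).1.trans (le_sSup hS₀),
    .sSup_of_directedOn ⟨S₀, hS₀⟩ hdir fun S hS ↦ (hc S hS).2.1, ?_⟩
  intro a haN ha hz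
  refine irreducible_associates_mk_iff.2 <|
    irreducible_mk_sSup_of_directedOn ⟨S₀, hS₀⟩ hdir ha fun S hS ↦ ?_
  obtain ⟨hNS, -, hirr⟩ := hc S hS
  exact ⟨hNS haN, irreducible_associates_mk_iff.1 (hirr a haN (hNS haN) hz)⟩

theorem exists_le_maximal {S : Submonoid G} (hS : OmegaAdmissible N S Ω) :
    ∃ M, S ≤ M ∧ Maximal (OmegaAdmissible N · Ω) M :=
  zorn_le_nonempty₀ {T | OmegaAdmissible N T Ω}
    (fun _ hc hchain _ hT ↦
      ⟨_, .sSup_of_directedOn ⟨_, hT⟩ hchain.directedOn hc, fun _ ↦ le_sSup⟩) S hS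

end OmegaAdmissible

theorem maximal_survival_general (N : Submonoid G) (Ω : Set (Multiset (Associates N)))
    (hΩ : ∀ z ∈ Ω, ∀ a ∈ z, Irreducible a) :
    ∃ S : Submonoid G, Maximal (OmegaAdmissible N · Ω) S :=
  have ⟨S, _, hS⟩ := (OmegaAdmissible.refl hΩ).exists_le_maximal
  ⟨S, hS⟩

end

/-- Maximal survival: the poset of `Ω`-admissible submonoids between `N` and `G`
under the order `≼` has a maximal element. -/
theorem maximal_survival {G : Type*} [CommGroup G] (N : Submonoid G) (b : G)
    (hb : b ∈ N) (ℓ : ℕ) (Ω : Set (Multiset (Associates N)))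
    (hΩ : Ω ⊆ ZSetLen N ⟨b, hb⟩ ℓ) :
    ∃ S : Submonoid G, OmegaAdmissible N S Ω ∧
      ∀ T : Submonoid G, OmegaAdmissible N T Ω → Prec S T → T = S := by
  obtain ⟨S, hS⟩ := maximal_survival_general N Ω fun z hz ↦ (hΩ hz).1.1
  exact ⟨S, hS.prop, fun T hT hST ↦ (hS.eq_of_le hT hST.1).symm⟩
end

section
/- Let G be a commutative group, N ≤ G a submonoid, b ∈ N, ℓ ∈ ℕ, and Ω ⊆ Z_{N,ℓ}(b) infinite. Let S be a maximal element of the poset 𝒮_Ω(N,G) of Ω-admissible submonoids between N and G under the order ≼ (i.e., S is Ω-admissible and every Ω-admissible T with S ≼ T equals S). Then for every u ∈ G satisfying condition (i) or condition (ii), one has b^2 * u ∈ S. -/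
/-!
If `T ≥ S` contains no factor of `b` outside `S`, then `S ≼ T` and `T` inherits admissibility
from `S`: a unit `x` of `T` is a factor of `b = x * (x⁻¹ * b)`, and the atoms occurring in `Ω` are
factors of `b`, so neither new units nor new splittings of these atoms can appear. A maximal `S`
therefore contains every `v` whose adjunction creates no factor of `b`, as is the case when
`b ∉ S * v ^ n` for `n ≥ 1`. For `v = b ^ 2 * u` a relation `b = q * v ^ n` cancels to
`u ^ n * (q * b ^ (2 * n - 2) * b) = 1`: this is excluded by condition (ii), and under
condition (i) it would make `b` a unit of `S`.
-/

section CommMonoid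

variable {M : Type*} [CommMonoid M]

lemma irreducible_associatesMk_iff {a : M} :
    Irreducible (Associates.mk a) ↔ Irreducible a := by
  simp only [irreducible_iff, Associates.isUnit_mk, Associates.forall_associated,
    Associates.mk_mul_mk, Associates.mk_eq_mk_iff_associated, Associated.comm (x := a)]
  refine and_congr_right fun _ ↦
    ⟨fun h x y hxy ↦ h x y (hxy ▸ Associated.refl _), fun h x y ⟨w, hw⟩ ↦ ?_⟩
  simpa using h (a := x) (b := y * w) (by rw [← hw, mul_assoc])

/-- Every factor of `b` in `T` already lies in `S`. By commutativity it suffices to ask this of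
the first factor in `x * y = b`. -/
def NoNewFactors (S T : Submonoid M) (b : M) : Prop :=
  ∀ x ∈ T, ∀ y ∈ T, x * y = b → x ∈ S

lemma noNewFactors_sup_powers {S : Submonoid M} {v b : M}
    (hv : ∀ q ∈ S, ∀ n : ℕ, q * v ^ n = b → n = 0) :
    NoNewFactors S (S ⊔ Submonoid.powers v) b := by
  intro x hx y hy hxy
  obtain ⟨s, hs, _, ⟨k, rfl⟩, rfl⟩ := Submonoid.mem_sup.mp hx
  obtain ⟨t, ht, _, ⟨m, rfl⟩, rfl⟩ := Submonoid.mem_sup.mp hy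
  have hkm : k + m = 0 :=
    hv (s * t) (S.mul_mem hs ht) (k + m) (by rw [← hxy, pow_add, mul_mul_mul_comm])
  obtain rfl : k = 0 := by lia
  simpa using hs

end CommMonoid

section CommGroup

variable {G : Type*} [CommGroup G] {N S T : Submonoid G} {b : G}

lemma isUnit_mk_iff_isUnitIn {x : G} (hx : x ∈ S) : IsUnit (⟨x, hx⟩ : S) ↔ IsUnitIn S x := by
  constructor
  · intro h
    obtain ⟨y, hxy⟩ := h.exists_right_inv
    rw [IsUnitIn, inv_eq_of_mul_eq_one_right (congrArg Subtype.val hxy)]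
    exact y.2
  · exact fun h ↦ IsUnit.of_mul_eq_one ⟨x⁻¹, h⟩ (Subtype.ext (mul_inv_cancel x))

lemma irreducible_associatesMk_iff_isUnitIn {a : G} (ha : a ∈ S) :
    Irreducible (Associates.mk (⟨a, ha⟩ : S)) ↔
      ¬ IsUnitIn S a ∧ ∀ x ∈ S, ∀ y ∈ S, x * y = a → IsUnitIn S x ∨ IsUnitIn S y := by
  rw [irreducible_associatesMk_iff]
  simp only [irreducible_iff, Subtype.forall, isUnit_mk_iff_isUnitIn, MulMemClass.mk_mul_mk,
    Subtype.mk.injEq, eq_comm (a := a)]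

lemma IsUnitIn.of_mul_right {x y : G} (hx : x ∈ S) (h : IsUnitIn S (x * y)) : IsUnitIn S y := by
  rw [IsUnitIn, show y⁻¹ = (x * y)⁻¹ * x by group]
  exact S.mul_mem h hx

lemma IsUnitIn.of_pow {x : G} {n : ℕ} (hx : x ∈ S) (hn : n ≠ 0) (h : IsUnitIn S (x ^ n)) :
    IsUnitIn S x := by
  rw [← pow_sub_one_mul hn] at h
  exact h.of_mul_right (S.pow_mem hx _)

lemma NoNewFactors.mem_of_isUnitIn (h : NoNewFactors S T b) (hb : b ∈ T) {x : G} (hx : x ∈ T)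
    (hx' : IsUnitIn T x) : x ∈ S :=
  h x hx (x⁻¹ * b) (T.mul_mem hx' hb) (mul_inv_cancel_left x b)

lemma NoNewFactors.isUnitIn (h : NoNewFactors S T b) (hb : b ∈ T) {x : G} (hx : x ∈ T)
    (hx' : IsUnitIn T x) : IsUnitIn S x :=
  h.mem_of_isUnitIn hb hx' (by rwa [IsUnitIn, inv_inv])

lemma NoNewFactors.prec (h : NoNewFactors S T b) (hST : S ≤ T) (hb : b ∈ T) : Prec S T :=
  ⟨hST, fun _ hx ↦ h.isUnitIn hb (hST hx)⟩

lemma NoNewFactors.unitReflecting (h : NoNewFactors S T b) (hb : b ∈ T)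
    (hS : UnitReflecting N S) : UnitReflecting N T :=
  fun w hw hw' ↦ hS w (h.mem_of_isUnitIn hb hw hw') (h.isUnitIn hb hw hw')

lemma NoNewFactors.irreducible (h : NoNewFactors S T b) (hST : S ≤ T) {a c : G} (ha : a ∈ S)
    (hc : c ∈ T) (hac : a * c = b) (hirr : Irreducible (Associates.mk (⟨a, ha⟩ : S))) :
    Irreducible (Associates.mk (⟨a, hST ha⟩ : T)) := by
  rw [irreducible_associatesMk_iff_isUnitIn] at hirr ⊢
  obtain ⟨hunit, hsplit⟩ := hirr
  have hb : b ∈ T := hac ▸ T.mul_mem (hST ha) hc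
  refine ⟨fun ha' ↦ hunit (h.isUnitIn hb (hST ha) ha'), fun x hx y hy hxy ↦ ?_⟩
  have hxS : x ∈ S := h x hx (y * c) (T.mul_mem hy hc) (by rw [← mul_assoc, hxy, hac])
  have hyS : y ∈ S :=
    h y hy (x * c) (T.mul_mem hx hc) (by rw [← mul_assoc, mul_comm y, hxy, hac])
  exact (hsplit x hxS y hyS hxy).imp (fun hx' ↦ hST hx') (fun hy' ↦ hST hy')

lemma exists_mul_eq_of_mem_of_mem_ZSet {hb : b ∈ N} {z : Multiset (Associates N)}
    (hz : z ∈ ZSet N ⟨b, hb⟩) {a : G} {ha : a ∈ N} (haz : Associates.mk (⟨a, ha⟩ : N) ∈ z) :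
    ∃ c ∈ N, a * c = b := by
  have hdvd := Multiset.dvd_prod haz
  rw [hz.2, Associates.mk_dvd_mk] at hdvd
  obtain ⟨c, hc⟩ := hdvd
  exact ⟨c, c.2, (congrArg Subtype.val hc).symm⟩

lemma NoNewFactors.omegaAdmissible {Ω : Set (Multiset (Associates N))} {hb : b ∈ N}
    (h : NoNewFactors S T b) (hST : S ≤ T) (hΩ : Ω ⊆ ZSet N ⟨b, hb⟩)
    (hadm : OmegaAdmissible N S Ω) : OmegaAdmissible N T Ω := by
  obtain ⟨hNS, hrefl, hirr⟩ := hadm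
  have hNT : N ≤ T := hNS.trans hST
  refine ⟨hNT, h.unitReflecting (hNT hb) hrefl, ?_⟩
  rintro a haN - ⟨z, hz, haz⟩
  obtain ⟨c, hc, hac⟩ := exists_mul_eq_of_mem_of_mem_ZSet (hΩ hz) haz
  exact h.irreducible hST (hNS haN) (hNT hc) hac (hirr a haN (hNS haN) ⟨z, hz, haz⟩)

lemma OmegaAdmissible.not_isUnitIn {Ω : Set (Multiset (Associates N))} {hb : b ∈ N}
    (hadm : OmegaAdmissible N S Ω) {z : Multiset (Associates N)} (hz : z ∈ Ω)
    (hzb : z ∈ ZSet N ⟨b, hb⟩) (hz0 : z ≠ 0) : ¬ IsUnitIn S b := by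
  obtain ⟨hNS, -, hirr⟩ := hadm
  obtain ⟨α, hα⟩ := Multiset.exists_mem_of_ne_zero hz0
  obtain ⟨⟨a, haN⟩, rfl⟩ := Associates.mk_surjective α
  obtain ⟨c, hc, hac⟩ := exists_mul_eq_of_mem_of_mem_ZSet hzb hα
  have ha := (irreducible_associatesMk_iff_isUnitIn _).mp (hirr a haN (hNS haN) ⟨z, hz, hα⟩)
  intro hbS
  rw [← hac, mul_comm] at hbS
  exact ha.1 (hbS.of_mul_right (hNS hc))

lemma isUnitIn_of_pow_mem_of_pow_mul_eq_one {u x : G} {m n : ℕ} (hm : m ≠ 0) (hu : u ^ m ∈ S)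
    (hx : x ∈ S) (h : u ^ n * x = 1) : IsUnitIn S x := by
  have hxm : IsUnitIn S (x ^ m) := by
    rw [IsUnitIn, ← inv_pow, ← eq_inv_of_mul_eq_one_left h, pow_right_comm]
    exact S.pow_mem hu n
  exact hxm.of_pow hx hm

lemma exists_pow_mul_mul_eq_one_of_mul_sq_mul_pow_eq {q u : G} {n : ℕ} (hb : b ∈ S) (hq : q ∈ S)
    (hn : n ≠ 0) (h : q * (b ^ 2 * u) ^ n = b) : ∃ p ∈ S, u ^ n * (p * b) = 1 := by
  obtain ⟨m, rfl⟩ := Nat.exists_eq_succ_of_ne_zero hn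
  refine ⟨q * b ^ (2 * m), S.mul_mem hq (S.pow_mem hb _), mul_right_cancel (b := b) ?_⟩
  calc u ^ (m + 1) * (q * b ^ (2 * m) * b) * b
      = q * (b ^ (2 * m + 1 + 1) * u ^ (m + 1)) := by
        rw [pow_succ b, pow_succ b]; ac_rfl
    _ = q * (b ^ 2 * u) ^ (m + 1) := by rw [mul_pow, ← pow_mul]; rfl
    _ = 1 * b := by rw [h, one_mul]

lemma eq_zero_of_mul_sq_mul_pow_eq {u : G} (hb : b ∈ S) (hbS : ¬ IsUnitIn S b)
    (hu : (∃ n₀ : ℕ, 1 ≤ n₀ ∧ u ^ n₀ ∈ S) ∨ (∀ n : ℕ, 1 ≤ n → ∀ q ∈ S, u ^ n * q ≠ 1)) :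
    ∀ q ∈ S, ∀ n : ℕ, q * (b ^ 2 * u) ^ n = b → n = 0 := by
  intro q hq n h
  by_contra hn
  obtain ⟨p, hp, hpb⟩ := exists_pow_mul_mul_eq_one_of_mul_sq_mul_pow_eq hb hq hn h
  have hpbS : p * b ∈ S := S.mul_mem hp hb
  rcases hu with ⟨n₀, hn₀, hun₀⟩ | hu
  · have hunit : IsUnitIn S (p * b) :=
      isUnitIn_of_pow_mem_of_pow_mul_eq_one (Nat.ne_of_gt hn₀) hun₀ hpbS hpb
    exact hbS (hunit.of_mul_right hp)
  · exact hu n (Nat.one_le_iff_ne_zero.mpr hn) (p * b) hpbS hpb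

end CommGroup

theorem maximal_forces_general {G : Type*} [CommGroup G] (N S : Submonoid G)
    (b : G) (hb : b ∈ N) (Ω : Set (Multiset (Associates N)))
    (hΩ : Ω ⊆ ZSet N ⟨b, hb⟩) (hbS : ¬ IsUnitIn S b)
    (hadm : OmegaAdmissible N S Ω)
    (hmax : ∀ T : Submonoid G, OmegaAdmissible N T Ω → Prec S T → T = S) :
    ∀ u : G,
      ((∃ n₀ : ℕ, 1 ≤ n₀ ∧ u ^ n₀ ∈ S) ∨
        (∀ n : ℕ, 1 ≤ n → ∀ q ∈ S, u ^ n * q ≠ 1)) →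
      b ^ 2 * u ∈ S := by
  intro u hu
  let T : Submonoid G := S ⊔ Submonoid.powers (b ^ 2 * u)
  have hST : S ≤ T := le_sup_left
  have hfac : NoNewFactors S T b :=
    noNewFactors_sup_powers (eq_zero_of_mul_sq_mul_pow_eq (hadm.1 hb) hbS hu)
  have hTS : T = S :=
    hmax T (hfac.omegaAdmissible hST hΩ hadm) (hfac.prec hST (hST (hadm.1 hb)))
  exact hTS.le (le_sup_right (a := S) (Submonoid.mem_powers _))

/-- Maximality forces `b^2 * u`: if `S` is a maximal element of the poset of
`Ω`-admissible submonoids under `≼`, with `Ω ⊆ Z_{N,ℓ}(b)` infinite, then for every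
`u` satisfying condition (i) or condition (ii) one has `b^2 * u ∈ S`. -/
theorem maximal_forces {G : Type*} [CommGroup G] (N S : Submonoid G)
    (b : G) (hb : b ∈ N) (ℓ : ℕ) (Ω : Set (Multiset (Associates N)))
    (hΩ : Ω ⊆ ZSetLen N ⟨b, hb⟩ ℓ) (hinf : Ω.Infinite)
    (hadm : OmegaAdmissible N S Ω)
    (hmax : ∀ T : Submonoid G, OmegaAdmissible N T Ω → Prec S T → T = S) :
    ∀ u : G,
      ((∃ n₀ : ℕ, 1 ≤ n₀ ∧ u ^ n₀ ∈ S) ∨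
        (∀ n : ℕ, 1 ≤ n → ∀ q ∈ S, u ^ n * q ≠ 1)) →
      b ^ 2 * u ∈ S := by
  obtain ⟨z, hz, hz0⟩ := hinf.nontrivial.exists_ne 0
  exact maximal_forces_general N S b hb Ω (fun _ h ↦ (hΩ h).1)
    (hadm.not_isUnitIn hz (hΩ hz).1 hz0) hadm hmax
end
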